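/- arXiv:2010.15098 — 3 statements merged into one kernel-verified Lean document; each statement's English description precedes it below -/
import Mathlib

section
/- Let (Z_n)_{n≥0} be a sequence of positive real numbers satisfying Z_{n+1} ≤ K b^n (Z_n^{1+μ₁} + Z_n^{1+μ₂}) for all n = 0, 1, 2, …, where b > 1, K > 0 and 0 < μ₁ ≤ μ₂. If Z_0 ≤ min(1, (2K)^{−1/μ₁} b^{−1/μ₁²}), then Z_n ≤ min(1, (2K)^{−1/μ₁} b^{−1/μ₁²} b^{−n/μ₁}) for all n ≥ 0; in particular Z_n → 0 as n → ∞. -/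
/-!
For a recursion `Y (n + 1) ≤ C bⁿ (Y n)^(1+α)`, the bound `Y n ≤ Y 0 qⁿ` controls the one-step
factor: `C bⁿ (Y n)^α ≤ C (Y 0)^α (b q^α)ⁿ`. If `b q^α ≤ 1` and `C (Y 0)^α ≤ q`, this factor is at
most `q`, so the bound propagates. The choice `q = b^(-1/α)` gives `b q^α = 1` and turns the second
condition into `Y 0 ≤ C^(-1/α) b^(-1/α²)`. Here `q ≤ 1`, so if `Y 0 ≤ 1` then every `Y n` is at most
`1`, where the power with the smaller exponent dominates; a sum of two powers thus reduces to a
single power, with `C = 2K`.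
-/

open Filter

theorem rpow_add_rpow_le_two_mul_rpow {x p q : ℝ} (hx : 0 < x) (hx1 : x ≤ 1) (hpq : p ≤ q) :
    x ^ p + x ^ q ≤ 2 * x ^ p := by
  linarith [Real.rpow_le_rpow_of_exponent_ge hx hx1 hpq]

theorem mul_rpow_le_iff_le_rpow_mul_rpow {C y q α : ℝ} (hC : 0 < C) (hy : 0 ≤ y) (hq : 0 ≤ q)
    (hα : 0 < α) : C * y ^ α ≤ q ↔ y ≤ C ^ (-(1 / α)) * q ^ (1 / α) := by
  rw [← le_div_iff₀' hC, ← Real.le_rpow_inv_iff_of_pos hy (by positivity) hα,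
    Real.div_rpow hq hC.le, Real.rpow_neg hC.le, one_div, div_eq_inv_mul]

section SuperlinearRecursion

variable {Y : ℕ → ℝ} {C b α : ℝ}

theorem le_mul_pow_of_superlinear_recursion {q : ℝ} (hY : ∀ n, 0 ≤ Y n) (hC : 0 ≤ C) (hb : 0 ≤ b)
    (hα : 0 ≤ α) (hrec : ∀ n, Y n ≤ Y 0 → Y (n + 1) ≤ C * b ^ n * Y n ^ (1 + α))
    (hq1 : q ≤ 1) (hbq : b * q ^ α ≤ 1) (hY0 : C * Y 0 ^ α ≤ q) (n : ℕ) :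
    Y n ≤ Y 0 * q ^ n := by
  have hq : 0 ≤ q := (mul_nonneg hC (Real.rpow_nonneg (hY 0) α)).trans hY0
  induction n with
  | zero => simp
  | succ n ih =>
    have hYn : Y n ≤ Y 0 := ih.trans (mul_le_of_le_one_right (hY 0) (pow_le_one₀ hq hq1))
    have hfactor : C * b ^ n * Y n ^ α ≤ q :=
      calc C * b ^ n * Y n ^ α ≤ C * b ^ n * (Y 0 * q ^ n) ^ α := by
            gcongr
            exact hY n
        _ = C * Y 0 ^ α * (b * q ^ α) ^ n := by
            rw [Real.mul_rpow (hY 0) (pow_nonneg hq n), ← Real.rpow_pow_comm hq, mul_pow]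
            ring
        _ ≤ q := (mul_le_of_le_one_right (mul_nonneg hC (Real.rpow_nonneg (hY 0) α))
            (pow_le_one₀ (by positivity) hbq)).trans hY0
    calc Y (n + 1) ≤ C * b ^ n * Y n ^ (1 + α) := hrec n hYn
      _ = C * b ^ n * Y n ^ α * Y n := by
          rw [Real.rpow_one_add' (hY n) (by positivity)]
          ring
      _ ≤ q * (Y 0 * q ^ n) := mul_le_mul hfactor ih (hY n) hq
      _ = Y 0 * q ^ (n + 1) := by ring

theorem le_mul_rpow_of_superlinear_recursion (hY : ∀ n, 0 ≤ Y n) (hC : 0 < C) (hb : 1 ≤ b)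
    (hα : 0 < α) (hrec : ∀ n, Y n ≤ Y 0 → Y (n + 1) ≤ C * b ^ n * Y n ^ (1 + α))
    (hY0 : Y 0 ≤ C ^ (-(1 / α)) * b ^ (-(1 / α ^ 2))) (n : ℕ) :
    Y n ≤ Y 0 * b ^ (-((n : ℝ) / α)) := by
  have hb0 : 0 < b := one_pos.trans_le hb
  set q := b ^ (-(1 / α)) with hq
  have hq1 : q ≤ 1 := Real.rpow_le_one_of_one_le_of_nonpos hb (by simpa using hα.le)
  have hbq : b * q ^ α = 1 := by
    rw [hq, ← Real.rpow_mul hb0.le, neg_mul, one_div_mul_cancel hα.ne', Real.rpow_neg_one,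
      mul_inv_cancel₀ hb0.ne']
  have hqα : q ^ (1 / α) = b ^ (-(1 / α ^ 2)) := by
    rw [hq, ← Real.rpow_mul hb0.le]
    ring_nf
  have hqn : q ^ n = b ^ (-((n : ℝ) / α)) := by
    rw [hq, ← Real.rpow_mul_natCast hb0.le]
    ring_nf
  have hsmall : C * Y 0 ^ α ≤ q := by
    rwa [mul_rpow_le_iff_le_rpow_mul_rpow hC (hY 0) (by positivity) hα, hqα]
  rw [← hqn]
  exact le_mul_pow_of_superlinear_recursion hY hC.le hb0.le hα.le hrec hq1 hbq.le hsmall n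

end SuperlinearRecursion

theorem tendsto_rpow_neg_natCast_div_atTop_nhds_zero {b α : ℝ} (hb : 1 < b) (hα : 0 < α) :
    Tendsto (fun n : ℕ => b ^ (-((n : ℝ) / α))) atTop (nhds 0) :=
  (tendsto_rpow_atBot_of_base_gt_one b hb).comp
    (tendsto_neg_atTop_atBot.comp (tendsto_natCast_atTop_atTop.atTop_div_const hα))

/-- Geometric convergence lemma (first smallness condition): if
`Z_{n+1} ≤ K bⁿ (Z_n^{1+μ₁} + Z_n^{1+μ₂})` with `b > 1`, `K > 0`, `0 < μ₁ ≤ μ₂`, and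
`Z₀ ≤ min(1, (2K)^{-1/μ₁} b^{-1/μ₁²})`, then
`Z_n ≤ min(1, (2K)^{-1/μ₁} b^{-1/μ₁²} b^{-n/μ₁})` for all `n`; in particular `Z_n → 0`. -/
theorem geometric_convergence_one (Z : ℕ → ℝ) (K b μ₁ μ₂ : ℝ)
    (hZpos : ∀ n, 0 < Z n) (hb : 1 < b) (hK : 0 < K)
    (hμ₁ : 0 < μ₁) (hμ₁₂ : μ₁ ≤ μ₂)
    (hrec : ∀ n : ℕ, Z (n + 1) ≤ K * b ^ (n : ℝ) * (Z n ^ (1 + μ₁) + Z n ^ (1 + μ₂)))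
    (hZ0 : Z 0 ≤ min 1 ((2 * K) ^ (-(1 / μ₁)) * b ^ (-(1 / μ₁ ^ 2)))) :
    (∀ n : ℕ, Z n ≤ min 1 ((2 * K) ^ (-(1 / μ₁)) * b ^ (-(1 / μ₁ ^ 2)) *
      b ^ (-((n : ℝ) / μ₁)))) ∧
    Tendsto Z atTop (nhds 0) := by
  obtain ⟨hZ0_one, hZ0_small⟩ := le_min_iff.mp hZ0
  have hrec_single : ∀ n, Z n ≤ Z 0 → Z (n + 1) ≤ 2 * K * b ^ n * Z n ^ (1 + μ₁) := fun n hn =>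
    calc Z (n + 1) ≤ K * b ^ (n : ℝ) * (Z n ^ (1 + μ₁) + Z n ^ (1 + μ₂)) := hrec n
      _ ≤ K * b ^ (n : ℝ) * (2 * Z n ^ (1 + μ₁)) := by
          gcongr
          exact rpow_add_rpow_le_two_mul_rpow (hZpos n) (hn.trans hZ0_one) (by gcongr)
      _ = 2 * K * b ^ n * Z n ^ (1 + μ₁) := by
          rw [Real.rpow_natCast]
          ring
  have hdecay : ∀ n : ℕ, Z n ≤ Z 0 * b ^ (-((n : ℝ) / μ₁)) :=
    le_mul_rpow_of_superlinear_recursion (fun n => (hZpos n).le) (by positivity) hb.le hμ₁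
      hrec_single hZ0_small
  refine ⟨fun n => le_min ?_ ?_, ?_⟩
  · exact (hdecay n).trans (mul_le_one₀ hZ0_one (by positivity)
      (Real.rpow_le_one_of_one_le_of_nonpos hb.le (neg_nonpos.mpr (by positivity))))
  · exact (hdecay n).trans (by gcongr)
  · exact squeeze_zero (fun n => (hZpos n).le) hdecay (by
      simpa using (tendsto_rpow_neg_natCast_div_atTop_nhds_zero hb hμ₁).const_mul (Z 0))
end

section
/- Let (Z_n)_{n≥0} be a sequence of positive real numbers satisfying Z_{n+1} ≤ K b^n (Z_n^{1+μ₁} + Z_n^{1+μ₂}) for all n = 0, 1, 2, …, where b > 1, K > 0 and 0 < μ₁ ≤ μ₂. If Z_0 ≤ min((2K)^{−1/μ₁} b^{−1/μ₁²}, (2K)^{−1/μ₂} b^{−1/(μ₁μ₂) − (μ₂−μ₁)/μ₂²}), then there exists n₀ ∈ ℕ ∪ {0} with Z_{n₀} ≤ 1, and for the smallest such n₀ one has Z_n ≤ min(1, (2K)^{−1/μ₁} b^{−1/μ₁²} b^{−n/μ₁}) for all n ≥ n₀; in particular Z_n → 0 as n → ∞. -/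
open Filter

/-!
With `z n = log (Z n)`, `L = log (2K)` and `β = log b`, the recursion becomes
`z (n + 1) ≤ L + nβ + (1 + μ) z n`, where `μ = μ₂` as long as `z n > 0` and `μ = μ₁` once
`z n ≤ 0`. If `z n` lies below the affine barrier `A n = -(L + nβ)/μ - β/μ²`, then the right-hand
side is at most `z n - β/μ`; the barrier itself drops by exactly `β/μ`, so `z` stays below it.

The two smallness conditions put `z 0` below the barrier `A` for `μ₁` and below a translate `B` of
the barrier for `μ₂`, itself lying below that barrier. While `z > 0` it stays below `B`, and
`B n → -∞`, so `z` becomes nonpositive at a first index `n₀`. The translate satisfies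
`A (n + 1) - B (n + 1) = (μ₂/μ₁ - 1) B n`: at `n₀ = m + 1` one has `0 < z m ≤ B m`, whence
`z n₀ ≤ B n₀ ≤ A n₀`. From then on the `μ₁`-recursion keeps `z` decreasing and below `A`.
-/

section Barriers

variable {𝕜 : Type*} [Field 𝕜]

/-- The affine barrier for the recursion `z (n + 1) ≤ L + nβ + (1 + μ) z n`, below which every step
decreases `z` by at least `β / μ`. For `L = log (2K)` and `β = log b` it is the logarithm of
`(2K)^{-1/μ} b^{-1/μ²} b^{-n/μ}`. -/
def descentBarrier (L β μ : 𝕜) (n : ℕ) : 𝕜 :=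
  -((L + n * β) / μ) - β / μ ^ 2

/-- The translate of `descentBarrier L β μ₂` that controls the phase `z > 0`, chosen so that leaving
this phase below it means entering the phase `z ≤ 0` below `descentBarrier L β μ₁`. For
`L = log (2K)`, `β = log b` and `n = 0` it is the logarithm of the second smallness threshold. -/
def entryBarrier (L β μ₁ μ₂ : 𝕜) (n : ℕ) : 𝕜 :=
  -((L + n * β) / μ₂) - β / (μ₁ * μ₂) - β * (μ₂ - μ₁) / μ₂ ^ 2

lemma descentBarrier_succ (L β μ : 𝕜) (n : ℕ) :
    descentBarrier L β μ (n + 1) = descentBarrier L β μ n - β / μ := by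
  simp only [descentBarrier, Nat.cast_succ]
  ring

lemma entryBarrier_succ (L β μ₁ μ₂ : 𝕜) (n : ℕ) :
    entryBarrier L β μ₁ μ₂ (n + 1) = entryBarrier L β μ₁ μ₂ n - β / μ₂ := by
  simp only [entryBarrier, Nat.cast_succ]
  ring

lemma descentBarrier_eq_zero_sub (L β μ : 𝕜) (n : ℕ) :
    descentBarrier L β μ n = descentBarrier L β μ 0 - n * (β / μ) := by
  simp only [descentBarrier, Nat.cast_zero]
  ring

lemma descentBarrier_sub_entryBarrier_succ {μ₁ μ₂ : 𝕜} (hμ₁ : μ₁ ≠ 0) (hμ₂ : μ₂ ≠ 0)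
    (L β : 𝕜) (n : ℕ) :
    descentBarrier L β μ₁ (n + 1) - entryBarrier L β μ₁ μ₂ (n + 1) =
      (μ₂ - μ₁) / μ₁ * entryBarrier L β μ₁ μ₂ n := by
  simp only [descentBarrier, entryBarrier, Nat.cast_succ]
  field_simp
  ring

lemma descentBarrier_sub_entryBarrier {μ₁ μ₂ : 𝕜} (hμ₁ : μ₁ ≠ 0) (hμ₂ : μ₂ ≠ 0)
    (L β : 𝕜) (n : ℕ) :
    descentBarrier L β μ₂ n - entryBarrier L β μ₁ μ₂ n =
      β * (μ₂ - μ₁) * (1 + μ₁) / (μ₁ * μ₂ ^ 2) := by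
  simp only [descentBarrier, entryBarrier]
  field_simp
  ring

variable [LinearOrder 𝕜] [IsStrictOrderedRing 𝕜] {L β μ μ₁ μ₂ : 𝕜} {z : ℕ → 𝕜}

lemma entryBarrier_le_descentBarrier (hβ : 0 ≤ β) (hμ₁ : 0 < μ₁) (hμ₁₂ : μ₁ ≤ μ₂) (n : ℕ) :
    entryBarrier L β μ₁ μ₂ n ≤ descentBarrier L β μ₂ n := by
  have hμ₂ : 0 < μ₂ := hμ₁.trans_le hμ₁₂
  rw [← sub_nonneg, descentBarrier_sub_entryBarrier hμ₁.ne' hμ₂.ne']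
  exact div_nonneg (mul_nonneg (mul_nonneg hβ (sub_nonneg.2 hμ₁₂)) (by positivity)) (by positivity)

lemma entryBarrier_succ_le_descentBarrier_succ (hμ₁ : 0 < μ₁) (hμ₁₂ : μ₁ ≤ μ₂) {n : ℕ}
    (hn : 0 ≤ entryBarrier L β μ₁ μ₂ n) :
    entryBarrier L β μ₁ μ₂ (n + 1) ≤ descentBarrier L β μ₁ (n + 1) := by
  rw [← sub_nonneg, descentBarrier_sub_entryBarrier_succ hμ₁.ne' (hμ₁.trans_le hμ₁₂).ne']
  exact mul_nonneg (div_nonneg (sub_nonneg.2 hμ₁₂) hμ₁.le) hn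

lemma le_sub_div_of_le_descentBarrier (hμ : 0 < μ) {x y : 𝕜} {n : ℕ}
    (hx : x ≤ descentBarrier L β μ n) (hy : y ≤ L + n * β + (1 + μ) * x) :
    y ≤ x - β / μ := by
  have hbarrier : μ * descentBarrier L β μ n = -(L + n * β) - β / μ := by
    rw [descentBarrier]
    field_simp
  calc
    y ≤ L + n * β + x + μ * x := by linarith
    _ ≤ L + n * β + x + μ * descentBarrier L β μ n := by gcongr
    _ = x - β / μ := by rw [hbarrier]; ring

lemma le_entryBarrier_of_forall_lt_pos (hβ : 0 ≤ β) (hμ₁ : 0 < μ₁) (hμ₁₂ : μ₁ ≤ μ₂)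
    (hrec : ∀ n : ℕ, 0 < z n → z (n + 1) ≤ L + n * β + (1 + μ₂) * z n)
    (h0 : z 0 ≤ entryBarrier L β μ₁ μ₂ 0) {n : ℕ} (hpos : ∀ m < n, 0 < z m) :
    z n ≤ entryBarrier L β μ₁ μ₂ n := by
  induction n with
  | zero => exact h0
  | succ n ih =>
    have hn : z n ≤ entryBarrier L β μ₁ μ₂ n := ih fun m hm ↦ hpos m (hm.trans n.lt_succ_self)
    have hstep : z (n + 1) ≤ z n - β / μ₂ :=
      le_sub_div_of_le_descentBarrier (hμ₁.trans_le hμ₁₂)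
        (hn.trans (entryBarrier_le_descentBarrier hβ hμ₁ hμ₁₂ n))
        (hrec n (hpos n n.lt_succ_self))
    rw [entryBarrier_succ]
    linarith

lemma le_descentBarrier_of_forall_lt_pos (hβ : 0 ≤ β) (hμ₁ : 0 < μ₁) (hμ₁₂ : μ₁ ≤ μ₂)
    (hrec : ∀ n : ℕ, 0 < z n → z (n + 1) ≤ L + n * β + (1 + μ₂) * z n)
    (h0 : z 0 ≤ descentBarrier L β μ₁ 0) (h0' : z 0 ≤ entryBarrier L β μ₁ μ₂ 0)
    {n : ℕ} (hpos : ∀ m < n, 0 < z m) :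
    z n ≤ descentBarrier L β μ₁ n := by
  cases n with
  | zero => exact h0
  | succ m =>
    have hentry {k : ℕ} (hk : ∀ j < k, 0 < z j) : z k ≤ entryBarrier L β μ₁ μ₂ k :=
      le_entryBarrier_of_forall_lt_pos hβ hμ₁ hμ₁₂ hrec h0' hk
    have hm : 0 < entryBarrier L β μ₁ μ₂ m :=
      (hpos m m.lt_succ_self).trans_le (hentry fun j hj ↦ hpos j (hj.trans m.lt_succ_self))
    exact (hentry hpos).trans (entryBarrier_succ_le_descentBarrier_succ hμ₁ hμ₁₂ hm.le)

lemma nonpos_and_le_descentBarrier_of_ge (hβ : 0 ≤ β) (hμ : 0 < μ)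
    (hrec : ∀ n : ℕ, z n ≤ 0 → z (n + 1) ≤ L + n * β + (1 + μ) * z n) {n₀ : ℕ}
    (hnonpos : z n₀ ≤ 0) (hbarrier : z n₀ ≤ descentBarrier L β μ n₀) {n : ℕ} (hn : n₀ ≤ n) :
    z n ≤ 0 ∧ z n ≤ descentBarrier L β μ n := by
  induction n, hn using Nat.le_induction with
  | base => exact ⟨hnonpos, hbarrier⟩
  | succ n _ ih =>
    obtain ⟨ih_nonpos, ih_barrier⟩ := ih
    have hstep : z (n + 1) ≤ z n - β / μ :=
      le_sub_div_of_le_descentBarrier hμ ih_barrier (hrec n ih_nonpos)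
    have hdrop : 0 ≤ β / μ := div_nonneg hβ hμ.le
    rw [descentBarrier_succ]
    constructor <;> linarith

lemma nonpos_and_le_descentBarrier_of_forall_lt_pos (hβ : 0 ≤ β) (hμ₁ : 0 < μ₁) (hμ₁₂ : μ₁ ≤ μ₂)
    (hlow : ∀ n : ℕ, z n ≤ 0 → z (n + 1) ≤ L + n * β + (1 + μ₁) * z n)
    (hhigh : ∀ n : ℕ, 0 < z n → z (n + 1) ≤ L + n * β + (1 + μ₂) * z n)
    (h0 : z 0 ≤ descentBarrier L β μ₁ 0) (h0' : z 0 ≤ entryBarrier L β μ₁ μ₂ 0)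
    {n₀ : ℕ} (hnonpos : z n₀ ≤ 0) (hpos : ∀ m < n₀, 0 < z m) {n : ℕ} (hn : n₀ ≤ n) :
    z n ≤ 0 ∧ z n ≤ descentBarrier L β μ₁ n :=
  nonpos_and_le_descentBarrier_of_ge hβ hμ₁ hlow hnonpos
    (le_descentBarrier_of_forall_lt_pos hβ hμ₁ hμ₁₂ hhigh h0 h0' hpos) hn

lemma tendsto_descentBarrier_atBot [Archimedean 𝕜] (L : 𝕜) (hβ : 0 < β) (hμ : 0 < μ) :
    Tendsto (descentBarrier L β μ) atTop atBot := by
  rw [funext (descentBarrier_eq_zero_sub L β μ)]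
  simp only [sub_eq_add_neg]
  exact tendsto_atBot_add_const_left _ _ <| tendsto_neg_atTop_atBot.comp <|
    tendsto_natCast_atTop_atTop.atTop_mul_const (div_pos hβ hμ)

lemma exists_nonpos_of_le_entryBarrier [Archimedean 𝕜] (hβ : 0 < β) (hμ₁ : 0 < μ₁)
    (hμ₁₂ : μ₁ ≤ μ₂) (hrec : ∀ n : ℕ, 0 < z n → z (n + 1) ≤ L + n * β + (1 + μ₂) * z n)
    (h0 : z 0 ≤ entryBarrier L β μ₁ μ₂ 0) :
    ∃ n, z n ≤ 0 := by
  by_contra! hpos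
  obtain ⟨n, hn⟩ := ((tendsto_descentBarrier_atBot L hβ
    (hμ₁.trans_le hμ₁₂)).eventually_le_atBot 0).exists
  have hzn : z n ≤ entryBarrier L β μ₁ μ₂ n :=
    le_entryBarrier_of_forall_lt_pos hβ.le hμ₁ hμ₁₂ hrec h0 fun m _ ↦ hpos m
  exact ((hzn.trans (entryBarrier_le_descentBarrier hβ.le hμ₁ hμ₁₂ n)).trans hn).not_gt (hpos n)

end Barriers

section Logarithm

lemma log_le_of_le_mul_rpow {x y C b t p : ℝ} (hx : 0 < x) (hy : 0 < y) (hC : 0 < C)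
    (hb : 0 < b) (h : y ≤ C * b ^ t * x ^ p) :
    Real.log y ≤ Real.log C + t * Real.log b + p * Real.log x := by
  calc
    Real.log y ≤ Real.log (C * b ^ t * x ^ p) := Real.log_le_log hy h
    _ = Real.log C + t * Real.log b + p * Real.log x := by
      rw [Real.log_mul (by positivity) (by positivity),
        Real.log_mul (by positivity) (by positivity), Real.log_rpow hb, Real.log_rpow hx]

variable {x y K b t p q : ℝ}

lemma log_le_of_le_mul_rpow_add_rpow_of_log_nonpos (hx : 0 < x) (hy : 0 < y) (hK : 0 < K)
    (hb : 0 < b) (hpq : p ≤ q) (h : y ≤ K * b ^ t * (x ^ p + x ^ q)) (hlog : Real.log x ≤ 0) :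
    Real.log y ≤ Real.log (2 * K) + t * Real.log b + p * Real.log x := by
  refine log_le_of_le_mul_rpow hx hy (by positivity) hb ?_
  calc
    y ≤ K * b ^ t * (x ^ p + x ^ q) := h
    _ ≤ K * b ^ t * (x ^ p + x ^ p) := by
      gcongr K * b ^ t * (x ^ p + ?_)
      exact Real.rpow_le_rpow_of_exponent_ge hx ((Real.log_nonpos_iff hx.le).1 hlog) hpq
    _ = 2 * K * b ^ t * x ^ p := by ring

lemma log_le_of_le_mul_rpow_add_rpow_of_log_pos (hx : 0 < x) (hy : 0 < y) (hK : 0 < K)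
    (hb : 0 < b) (hpq : p ≤ q) (h : y ≤ K * b ^ t * (x ^ p + x ^ q)) (hlog : 0 < Real.log x) :
    Real.log y ≤ Real.log (2 * K) + t * Real.log b + q * Real.log x := by
  have hx1 : 1 ≤ x := ((Real.log_pos_iff hx.le).1 hlog).le
  refine log_le_of_le_mul_rpow hx hy (by positivity) hb ?_
  calc
    y ≤ K * b ^ t * (x ^ p + x ^ q) := h
    _ ≤ K * b ^ t * (x ^ q + x ^ q) := by gcongr
    _ = 2 * K * b ^ t * x ^ q := by ring

lemma exp_descentBarrier {C b : ℝ} (hC : 0 < C) (hb : 0 < b) (μ : ℝ) (n : ℕ) :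
    Real.exp (descentBarrier (Real.log C) (Real.log b) μ n) =
      C ^ (-(1 / μ)) * b ^ (-(1 / μ ^ 2)) * b ^ (-((n : ℝ) / μ)) := by
  simp only [Real.rpow_def_of_pos hC, Real.rpow_def_of_pos hb, ← Real.exp_add, descentBarrier]
  ring_nf

lemma exp_descentBarrier_zero {C b : ℝ} (hC : 0 < C) (hb : 0 < b) (μ : ℝ) :
    Real.exp (descentBarrier (Real.log C) (Real.log b) μ 0) =
      C ^ (-(1 / μ)) * b ^ (-(1 / μ ^ 2)) := by
  simp [exp_descentBarrier hC hb]

lemma exp_entryBarrier_zero {C b : ℝ} (hC : 0 < C) (hb : 0 < b) (μ₁ μ₂ : ℝ) :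
    Real.exp (entryBarrier (Real.log C) (Real.log b) μ₁ μ₂ 0) =
      C ^ (-(1 / μ₂)) * b ^ (-(1 / (μ₁ * μ₂)) - (μ₂ - μ₁) / μ₂ ^ 2) := by
  simp only [Real.rpow_def_of_pos hC, Real.rpow_def_of_pos hb, ← Real.exp_add, entryBarrier,
    Nat.cast_zero]
  ring_nf

lemma le_min_one_exp_iff {a : ℝ} (hx : 0 < x) :
    x ≤ min 1 (Real.exp a) ↔ Real.log x ≤ 0 ∧ Real.log x ≤ a := by
  rw [le_min_iff, Real.log_nonpos_iff hx.le, Real.log_le_iff_le_exp hx]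

lemma tendsto_zero_of_eventually_le_exp {ι : Type*} {l : Filter ι} {f a : ι → ℝ}
    (ha : Tendsto a l atBot) (hf : ∀ᶠ i in l, 0 ≤ f i) (hle : ∀ᶠ i in l, f i ≤ Real.exp (a i)) :
    Tendsto f l (nhds 0) :=
  squeeze_zero' hf hle (Real.tendsto_exp_atBot.comp ha)

end Logarithm

/-- Geometric convergence lemma (second smallness condition): if
`Z_{n+1} ≤ K bⁿ (Z_n^{1+μ₁} + Z_n^{1+μ₂})` with `b > 1`, `K > 0`, `0 < μ₁ ≤ μ₂`, and
`Z₀ ≤ min((2K)^{-1/μ₁} b^{-1/μ₁²}, (2K)^{-1/μ₂} b^{-1/(μ₁μ₂) - (μ₂-μ₁)/μ₂²})`, then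
`Z_{n₀} ≤ 1` for some `n₀`, and for the smallest such `n₀` one has
`Z_n ≤ min(1, (2K)^{-1/μ₁} b^{-1/μ₁²} b^{-n/μ₁})` for all `n ≥ n₀`;
in particular `Z_n → 0`. -/
theorem geometric_convergence_two (Z : ℕ → ℝ) (K b μ₁ μ₂ : ℝ)
    (hZpos : ∀ n, 0 < Z n) (hb : 1 < b) (hK : 0 < K)
    (hμ₁ : 0 < μ₁) (hμ₁₂ : μ₁ ≤ μ₂)
    (hrec : ∀ n : ℕ, Z (n + 1) ≤ K * b ^ (n : ℝ) * (Z n ^ (1 + μ₁) + Z n ^ (1 + μ₂)))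
    (hZ0 : Z 0 ≤ min ((2 * K) ^ (-(1 / μ₁)) * b ^ (-(1 / μ₁ ^ 2)))
      ((2 * K) ^ (-(1 / μ₂)) * b ^ (-(1 / (μ₁ * μ₂)) - (μ₂ - μ₁) / μ₂ ^ 2))) :
    (∃ n₀ : ℕ, Z n₀ ≤ 1) ∧
    (∀ n₀ : ℕ, Z n₀ ≤ 1 → (∀ m < n₀, 1 < Z m) →
      ∀ n, n₀ ≤ n → Z n ≤ min 1 ((2 * K) ^ (-(1 / μ₁)) * b ^ (-(1 / μ₁ ^ 2)) *
        b ^ (-((n : ℝ) / μ₁)))) ∧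
    Tendsto Z atTop (nhds 0) := by
  have hb0 : 0 < b := one_pos.trans hb
  have h2K : 0 < 2 * K := by positivity
  have hβ : 0 < Real.log b := Real.log_pos hb
  have hlow (n : ℕ) (hn : Real.log (Z n) ≤ 0) : Real.log (Z (n + 1)) ≤
      Real.log (2 * K) + n * Real.log b + (1 + μ₁) * Real.log (Z n) :=
    log_le_of_le_mul_rpow_add_rpow_of_log_nonpos (hZpos n) (hZpos _) hK hb0 (by gcongr) (hrec n) hn
  have hhigh (n : ℕ) (hn : 0 < Real.log (Z n)) : Real.log (Z (n + 1)) ≤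
      Real.log (2 * K) + n * Real.log b + (1 + μ₂) * Real.log (Z n) :=
    log_le_of_le_mul_rpow_add_rpow_of_log_pos (hZpos n) (hZpos _) hK hb0 (by gcongr) (hrec n) hn
  simp only [← exp_descentBarrier h2K hb0]
  rw [← exp_descentBarrier_zero h2K hb0, ← exp_entryBarrier_zero h2K hb0, le_min_iff,
    ← Real.log_le_iff_le_exp (hZpos 0), ← Real.log_le_iff_le_exp (hZpos 0)] at hZ0
  have hexists : ∃ n₀, Z n₀ ≤ 1 :=
    (exists_nonpos_of_le_entryBarrier (z := Real.log ∘ Z) hβ hμ₁ hμ₁₂ hhigh hZ0.2).imp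
      fun n ↦ (Real.log_nonpos_iff (hZpos n).le).1
  have hbound (n₀ : ℕ) (h0 : Z n₀ ≤ 1) (hmin : ∀ m < n₀, 1 < Z m) (n : ℕ) (hn : n₀ ≤ n) :
      Z n ≤ min 1 (Real.exp (descentBarrier (Real.log (2 * K)) (Real.log b) μ₁ n)) :=
    (le_min_one_exp_iff (hZpos n)).2 <| nonpos_and_le_descentBarrier_of_forall_lt_pos
      (z := Real.log ∘ Z) hβ.le hμ₁ hμ₁₂ hlow hhigh hZ0.1 hZ0.2
      (Real.log_nonpos (hZpos n₀).le h0) (fun m hm ↦ Real.log_pos (hmin m hm)) hn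
  have hfirst (m : ℕ) (hm : m < Nat.find hexists) : 1 < Z m := not_le.1 (Nat.find_min hexists hm)
  exact ⟨hexists, hbound, tendsto_zero_of_eventually_le_exp (tendsto_descentBarrier_atBot _ hβ hμ₁)
    (.of_forall fun n ↦ (hZpos n).le) <| (eventually_ge_atTop _).mono fun n hn ↦
      (hbound _ (Nat.find_spec hexists) hfirst n hn).trans (min_le_right _ _)⟩
end

section
/- Let (A, 𝔉, μ) be a measure space, let f, h : A → [0, ∞) be measurable with h(x) ≥ 1 for μ-a.e. x ∈ A, and let p, q : A → ℝ be measurable with p(x) > 0 and 1 < q(x) ≤ q⁺ < ∞ for all x ∈ A, where q⁺ is a constant. Let a₄, a₅, b₁ > 0 and set ε := min(1, a₄/(2b₁)). If ∫_A f(x)^{p(x)} dμ(x) < ∞, ∫_A h(x)^{q(x)} dμ(x) < ∞, and a₄ ∫_A f(x)^{p(x)} dμ(x) ≤ a₅ ∫_A h(x)^{q(x)} dμ(x) + b₁ ∫_A f(x)^{p(x)(q(x)−1)/q(x)} h(x) dμ(x), then ∫_A f(x)^{p(x)} dμ(x) ≤ (2/a₄)(a₅ + b₁ ε^{−(q⁺−1)})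 ∫_A h(x)^{q(x)} dμ(x). -/
/-!
With `θ = 1 / q`, weighted AM-GM applied to `ε u` and `ε ^ (-(q - 1)) v ^ q` with weights `1 - θ`
and `θ` is Young's inequality with a small parameter: the powers of `ε` cancel in the geometric
mean, leaving `u ^ ((q - 1) / q) v`. For `ε ≤ 1` the large coefficient is at most
`ε ^ (-(q⁺ - 1))` whatever the value of `q ≤ q⁺`, so a single `ε` serves for a variable exponent.
Integrating with `u = f ^ p` and `v = h`, the choice `ε ≤ a₄ / (2 b₁)` lets half of the left-hand
side absorb the term in `∫ f ^ p`.
-/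

open MeasureTheory Real

section Young

variable {u v q Q ε : ℝ}

lemma young_inequality_rpow_mul (hu : 0 ≤ u) (hv : 0 ≤ v) (hq : 1 ≤ q) (hε : 0 < ε) :
    u ^ ((q - 1) / q) * v ≤ (q - 1) / q * (ε * u) + 1 / q * (ε ^ (-(q - 1)) * v ^ q) := by
  have hq0 : 0 < q := by linarith
  have amgm := geom_mean_le_arith_mean2_weighted (w₁ := (q - 1) / q) (w₂ := 1 / q)
    (p₁ := ε * u) (p₂ := ε ^ (-(q - 1)) * v ^ q)
    (div_nonneg (by linarith) hq0.le) (by positivity) (by positivity) (by positivity)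
    (by field_simp; ring)
  have geom_mean : (ε * u) ^ ((q - 1) / q) * (ε ^ (-(q - 1)) * v ^ q) ^ (1 / q) =
      u ^ ((q - 1) / q) * v :=
    calc (ε * u) ^ ((q - 1) / q) * (ε ^ (-(q - 1)) * v ^ q) ^ (1 / q)
      _ = ε ^ ((q - 1) / q) * u ^ ((q - 1) / q) * (ε ^ (-((q - 1) / q)) * v) := by
        rw [mul_rpow hε.le hu, mul_rpow (by positivity) (by positivity), ← rpow_mul hε.le,
          one_div, rpow_rpow_inv hv hq0.ne', ← div_eq_mul_inv, neg_div]
      _ = ε ^ ((q - 1) / q) * ε ^ (-((q - 1) / q)) * (u ^ ((q - 1) / q) * v) := by ring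
      _ = u ^ ((q - 1) / q) * v := by
        rw [← rpow_add hε, add_neg_cancel, rpow_zero, one_mul]
  exact geom_mean ▸ amgm

lemma rpow_mul_le_add_of_exponent_le (hu : 0 ≤ u) (hv : 0 ≤ v) (hq : 1 ≤ q) (hqQ : q ≤ Q)
    (hε : 0 < ε) (hε1 : ε ≤ 1) :
    u ^ ((q - 1) / q) * v ≤ ε * u + ε ^ (-(Q - 1)) * v ^ q := by
  have hq0 : 0 < q := by linarith
  calc u ^ ((q - 1) / q) * v
    _ ≤ (q - 1) / q * (ε * u) + 1 / q * (ε ^ (-(q - 1)) * v ^ q) :=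
      young_inequality_rpow_mul hu hv hq hε
    _ ≤ ε * u + ε ^ (-(q - 1)) * v ^ q :=
      add_le_add
        (mul_le_of_le_one_left (by positivity) ((div_le_one hq0).2 (by linarith)))
        (mul_le_of_le_one_left (by positivity) ((div_le_one hq0).2 hq))
    _ ≤ ε * u + ε ^ (-(Q - 1)) * v ^ q := by
      gcongr ε * u + ?_ * v ^ q
      exact rpow_le_rpow_of_exponent_ge hε hε1 (by linarith)

end Young

section Integral

variable {A : Type*} [MeasurableSpace A] {μ : Measure A} {F h q : A → ℝ} {Q a b c ε : ℝ}

lemma ae_rpow_mul_le_add (hF0 : 0 ≤ᵐ[μ] F) (hh0 : 0 ≤ᵐ[μ] h)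
    (hqQ : ∀ᵐ x ∂μ, q x ∈ Set.Icc 1 Q) (hε : 0 < ε) (hε1 : ε ≤ 1) :
    ∀ᵐ x ∂μ, F x ^ ((q x - 1) / q x) * h x ≤ ε * F x + ε ^ (-(Q - 1)) * h x ^ q x := by
  filter_upwards [hF0, hh0, hqQ] with x hFx hhx hqx
  exact rpow_mul_le_add_of_exponent_le hFx hhx hqx.1 hqx.2 hε hε1

lemma integrable_rpow_mul (hF0 : 0 ≤ᵐ[μ] F) (hh : AEMeasurable h μ) (hh0 : 0 ≤ᵐ[μ] h)
    (hq : AEMeasurable q μ) (hqQ : ∀ᵐ x ∂μ, q x ∈ Set.Icc 1 Q)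
    (hF : Integrable F μ) (hhq : Integrable (fun x => h x ^ q x) μ) :
    Integrable (fun x => F x ^ ((q x - 1) / q x) * h x) μ := by
  have measurable : AEMeasurable (fun x => F x ^ ((q x - 1) / q x) * h x) μ :=
    (hF.aemeasurable.pow ((hq.sub_const 1).div hq)).mul hh
  refine ((hF.const_mul 1).add (hhq.const_mul (1 ^ (-(Q - 1))))).mono'
    measurable.aestronglyMeasurable ?_
  filter_upwards [hF0, hh0, ae_rpow_mul_le_add hF0 hh0 hqQ one_pos le_rfl] with x hFx hhx hle
  rwa [norm_of_nonneg (mul_nonneg (rpow_nonneg hFx _) hhx)]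

lemma integral_rpow_mul_le_add (hF0 : 0 ≤ᵐ[μ] F) (hh : AEMeasurable h μ) (hh0 : 0 ≤ᵐ[μ] h)
    (hq : AEMeasurable q μ) (hqQ : ∀ᵐ x ∂μ, q x ∈ Set.Icc 1 Q)
    (hF : Integrable F μ) (hhq : Integrable (fun x => h x ^ q x) μ)
    (hε : 0 < ε) (hε1 : ε ≤ 1) :
    ∫ x, F x ^ ((q x - 1) / q x) * h x ∂μ ≤
      ε * ∫ x, F x ∂μ + ε ^ (-(Q - 1)) * ∫ x, h x ^ q x ∂μ := by
  rw [← integral_const_mul, ← integral_const_mul,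
    ← integral_add (hF.const_mul ε) (hhq.const_mul _)]
  exact integral_mono_ae (integrable_rpow_mul hF0 hh hh0 hq hqQ hF hhq)
    ((hF.const_mul ε).add (hhq.const_mul _)) (ae_rpow_mul_le_add hF0 hh0 hqQ hε hε1)

lemma sub_mul_integral_le_of_le_add_integral_rpow_mul (hF0 : 0 ≤ᵐ[μ] F)
    (hh : AEMeasurable h μ) (hh0 : 0 ≤ᵐ[μ] h)
    (hq : AEMeasurable q μ) (hqQ : ∀ᵐ x ∂μ, q x ∈ Set.Icc 1 Q)
    (hF : Integrable F μ) (hhq : Integrable (fun x => h x ^ q x) μ)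
    (hε : 0 < ε) (hε1 : ε ≤ 1) (hb : 0 ≤ b)
    (hineq : a * ∫ x, F x ∂μ ≤
      c * ∫ x, h x ^ q x ∂μ + b * ∫ x, F x ^ ((q x - 1) / q x) * h x ∂μ) :
    (a - b * ε) * ∫ x, F x ∂μ ≤ (c + b * ε ^ (-(Q - 1))) * ∫ x, h x ^ q x ∂μ := by
  have young := mul_le_mul_of_nonneg_left
    (integral_rpow_mul_le_add hF0 hh hh0 hq hqQ hF hhq hε hε1) hb
  linarith

theorem absorb_gradient_term_general (hF0 : 0 ≤ᵐ[μ] F)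
    (hh : AEMeasurable h μ) (hh0 : 0 ≤ᵐ[μ] h)
    (hq : AEMeasurable q μ) (hqQ : ∀ᵐ x ∂μ, q x ∈ Set.Icc 1 Q)
    (ha : 0 < a) (hb : 0 < b) (hε : ε = min 1 (a / (2 * b)))
    (hF : Integrable F μ) (hhq : Integrable (fun x => h x ^ q x) μ)
    (hineq : a * ∫ x, F x ∂μ ≤
      c * ∫ x, h x ^ q x ∂μ + b * ∫ x, F x ^ ((q x - 1) / q x) * h x ∂μ) :
    ∫ x, F x ∂μ ≤ 2 / a * (c + b * ε ^ (-(Q - 1))) * ∫ x, h x ^ q x ∂μ := by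
  have hε0 : 0 < ε := by rw [hε]; positivity
  have hε1 : ε ≤ 1 := hε ▸ min_le_left _ _
  have half_le : a / 2 ≤ a - b * ε := by
    have hle : ε ≤ a / (2 * b) := hε ▸ min_le_right _ _
    rw [le_div_iff₀ (by positivity)] at hle
    linarith
  have integral_F_nonneg : 0 ≤ ∫ x, F x ∂μ := integral_nonneg_of_ae hF0
  calc ∫ x, F x ∂μ
    _ = 2 / a * (a / 2 * ∫ x, F x ∂μ) := by field_simp
    _ ≤ 2 / a * ((a - b * ε) * ∫ x, F x ∂μ) := by gcongr
    _ ≤ 2 / a * ((c + b * ε ^ (-(Q - 1))) * ∫ x, h x ^ q x ∂μ) := by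
      gcongr 2 / a * ?_
      exact sub_mul_integral_le_of_le_add_integral_rpow_mul hF0 hh hh0 hq hqQ hF hhq hε0 hε1
        hb.le hineq
    _ = 2 / a * (c + b * ε ^ (-(Q - 1))) * ∫ x, h x ^ q x ∂μ := by rw [mul_assoc]

end Integral

/-- Absorption of the gradient term: if `f, h ≥ 0` are measurable, `h ≥ 1` a.e.,
`p(x) > 0`, `1 < q(x) ≤ q⁺`, `a₄, a₅, b₁ > 0`, `ε := min(1, a₄/(2b₁))`,
`∫ f^{p(x)} < ∞`, `∫ h^{q(x)} < ∞` and
`a₄ ∫ f^{p(x)} ≤ a₅ ∫ h^{q(x)} + b₁ ∫ f^{p(x)(q(x)-1)/q(x)} h`, then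
`∫ f^{p(x)} ≤ (2/a₄)(a₅ + b₁ ε^{-(q⁺-1)}) ∫ h^{q(x)}`. -/
theorem absorb_gradient_term {A : Type*} [MeasurableSpace A] (μ : Measure A)
    (f h p q : A → ℝ) (qp a₄ a₅ b₁ ε : ℝ)
    (hf : Measurable f) (hh : Measurable h) (hp : Measurable p) (hq : Measurable q)
    (hf0 : ∀ x, 0 ≤ f x) (hh0 : ∀ x, 0 ≤ h x) (hh1 : ∀ᵐ x ∂μ, 1 ≤ h x)
    (hp0 : ∀ x, 0 < p x) (hq1 : ∀ x, 1 < q x) (hqp : ∀ x, q x ≤ qp)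
    (ha₄ : 0 < a₄) (ha₅ : 0 < a₅) (hb₁ : 0 < b₁)
    (hε : ε = min 1 (a₄ / (2 * b₁)))
    (hfint : Integrable (fun x => f x ^ (p x)) μ)
    (hhint : Integrable (fun x => h x ^ (q x)) μ)
    (hineq : a₄ * ∫ x, f x ^ (p x) ∂μ ≤
      a₅ * ∫ x, h x ^ (q x) ∂μ +
        b₁ * ∫ x, f x ^ (p x * (q x - 1) / q x) * h x ∂μ) :
    ∫ x, f x ^ (p x) ∂μ ≤
      (2 / a₄) * (a₅ + b₁ * ε ^ (-(qp - 1))) * ∫ x, h x ^ (q x) ∂μ := by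
  simp only [mul_div_assoc, rpow_mul (hf0 _)] at hineq
  exact absorb_gradient_term_general (.of_forall fun x => rpow_nonneg (hf0 x) (p x))
    hh.aemeasurable (.of_forall hh0) hq.aemeasurable (.of_forall fun x => ⟨(hq1 x).le, hqp x⟩)
    ha₄ hb₁ hε hfint hhint hineq
end
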